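/- arXiv:1505.02978 — 3 statements merged into one kernel-verified Lean document; each statement's English description precedes it below -/
import Mathlib

section
/- Let γ : ℝ × [0,T) → ℝ², γ(u,t) = (x(u,t), y(u,t)), be a curve diffusion flow (a smooth family of closed regular plane curves satisfying ⟨∂_t γ, ν⟩ = −κ_ss) such that at every time t the curve γ(·,t) has winding number zero, i.e. ∫₀^{2π} κ |∂_u γ| du = 0. Then T ≤ L(0)⁴ / (64 π⁴), where L(0) is the length of the initial curve. -/
open Real MeasureTheory Filter

/-- Euclidean inner product on `ℝ × ℝ`. -/
def innerP (a b : ℝ × ℝ) : ℝ := a.1 * b.1 + a.2 * b.2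

/-- Speed `|γ'|` of a plane curve in a general parametrisation. -/
noncomputable def speed (γ : ℝ → ℝ × ℝ) (u : ℝ) : ℝ :=
  Real.sqrt ((deriv γ u).1 ^ 2 + (deriv γ u).2 ^ 2)

/-- Unit normal `ν = |γ'|⁻¹ (y', -x')`. -/
noncomputable def nuG (γ : ℝ → ℝ × ℝ) (u : ℝ) : ℝ × ℝ :=
  ((deriv γ u).2 / speed γ u, -(deriv γ u).1 / speed γ u)

/-- Arc-length derivative `∂_s = |γ'|⁻¹ ∂_u` of a scalar function. -/
noncomputable def arcD (γ : ℝ → ℝ × ℝ) (f : ℝ → ℝ) (u : ℝ) : ℝ :=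
  (speed γ u)⁻¹ * deriv f u

/-- Arc-length derivative of a vector-valued function. -/
noncomputable def arcDV (γ : ℝ → ℝ × ℝ) (F : ℝ → ℝ × ℝ) (u : ℝ) : ℝ × ℝ :=
  (speed γ u)⁻¹ • deriv F u

/-- Curvature `κ = ⟨∂_s² γ, ν⟩`. -/
noncomputable def curvG (γ : ℝ → ℝ × ℝ) (u : ℝ) : ℝ :=
  innerP (arcDV γ (arcDV γ γ) u) (nuG γ u)

/-- `κ_s`, the arc-length derivative of the curvature. -/
noncomputable def curvGS (γ : ℝ → ℝ × ℝ) (u : ℝ) : ℝ := arcD γ (curvG γ) u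

/-- `κ_ss`, the second arc-length derivative of the curvature. -/
noncomputable def curvGSS (γ : ℝ → ℝ × ℝ) (u : ℝ) : ℝ := arcD γ (curvGS γ) u

/-- Length of the closed curve `γ(·,t)` over one period `[0, 2π]`. -/
noncomputable def clen (γ : ℝ → ℝ → ℝ × ℝ) (t : ℝ) : ℝ :=
  ∫ u in (0:ℝ)..(2 * Real.pi), speed (fun u' => γ u' t) u

/-!
Let `L` be the length, `κ` the curvature and `τ` the unit tangent. The flow shrinks length at the
rate `L' = -∫ κ_s² ds`. Both `τ` and `κ` have mean zero along the curve: `τ` because the curve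
closes up, `κ` because the winding number vanishes. Wirtinger's inequality applied to each of them
gives `4π² ≤ L ∫ κ² ds` and `4π² ∫ κ² ds ≤ L² ∫ κ_s² ds`, so `(L⁴)' = -4 L³ ∫ κ_s² ds ≤ -64π⁴`.
Since `L⁴` stays nonnegative, this cannot last longer than `L(0)⁴ / (64π⁴)`.
-/

section Wirtinger

variable {a b : ℝ} {f f' : ℝ → ℂ}

theorem two_pi_mul_norm_fourierCoeffOn_le (hab : a < b)
    (hf : ∀ x ∈ Set.uIcc a b, HasDerivAt f (f' x) x) (hf' : IntervalIntegrable f' volume a b)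
    (hper : f b = f a) (hmean : ∫ x in a..b, f x = 0) (n : ℤ) :
    2 * π * ‖fourierCoeffOn hab f n‖ ≤ (b - a) * ‖fourierCoeffOn hab f' n‖ := by
  have hba : 0 < b - a := sub_pos.2 hab
  rcases eq_or_ne n 0 with rfl | hn
  · have hcoeff : fourierCoeffOn hab f 0 = 0 := by simp [fourierCoeffOn_eq_integral, hmean]
    rw [hcoeff, norm_zero, mul_zero]
    positivity
  · have hn1 : (1 : ℝ) ≤ |(n : ℝ)| := mod_cast Int.one_le_abs hn
    have hcoeff : 2 * π * |(n : ℝ)| * ‖fourierCoeffOn hab f n‖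
        = (b - a) * ‖fourierCoeffOn hab f' n‖ := by
      rw [fourierCoeffOn_of_hasDerivAt hab hn hf hf', hper, sub_self, mul_zero, zero_sub,
        ← Complex.ofReal_sub]
      simp only [norm_mul, norm_div, norm_neg, norm_one, Complex.norm_ofNat, Complex.norm_real,
        Real.norm_eq_abs, abs_of_pos pi_pos, abs_of_pos hba, Complex.norm_I, Complex.norm_intCast]
      field_simp
    rw [← hcoeff]
    exact mul_le_mul_of_nonneg_right (le_mul_of_one_le_right two_pi_pos.le hn1) (norm_nonneg _)

theorem hasSum_sq_norm_fourierCoeffOn_of_continuousOn (hab : a < b)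
    (hf : ContinuousOn f (Set.Icc a b)) :
    HasSum (fun n : ℤ => ‖fourierCoeffOn hab f n‖ ^ 2) ((b - a)⁻¹ * ∫ x in a..b, ‖f x‖ ^ 2) := by
  have hIoc : ContinuousOn f (Set.Ioc a b) := hf.mono Set.Ioc_subset_Icc_self
  refine hasSum_sq_fourierCoeffOn hab
    ((memLp_two_iff_integrable_sq_norm (hIoc.aestronglyMeasurable measurableSet_Ioc)).2 ?_)
  exact (hf.norm.pow 2).integrableOn_Icc.mono_set Set.Ioc_subset_Icc_self

theorem wirtinger_interval (hab : a < b) (hf : ∀ x ∈ Set.Icc a b, HasDerivAt f (f' x) x)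
    (hf' : ContinuousOn f' (Set.Icc a b)) (hper : f b = f a) (hmean : ∫ x in a..b, f x = 0) :
    (2 * π) ^ 2 * ∫ x in a..b, ‖f x‖ ^ 2 ≤ (b - a) ^ 2 * ∫ x in a..b, ‖f' x‖ ^ 2 := by
  have hba : 0 < b - a := sub_pos.2 hab
  have hcoeff (n : ℤ) : (2 * π) ^ 2 * ‖fourierCoeffOn hab f n‖ ^ 2
      ≤ (b - a) ^ 2 * ‖fourierCoeffOn hab f' n‖ ^ 2 := by
    rw [← mul_pow, ← mul_pow]
    exact pow_le_pow_left₀ (by positivity) (two_pi_mul_norm_fourierCoeffOn_le hab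
      (by rwa [Set.uIcc_of_le hab.le]) (hf'.intervalIntegrable_of_Icc hab.le) hper hmean n) 2
  have hsum := hasSum_le hcoeff
    ((hasSum_sq_norm_fourierCoeffOn_of_continuousOn hab
      fun x hx => (hf x hx).continuousAt.continuousWithinAt).mul_left _)
    ((hasSum_sq_norm_fourierCoeffOn_of_continuousOn hab hf').mul_left _)
  rwa [mul_left_comm, mul_left_comm _ (b - a)⁻¹,
    mul_le_mul_iff_right₀ (inv_pos.2 hba)] at hsum

theorem exists_hasDerivAt_leftInverse_integral {v : ℝ → ℝ} (ha : 0 < a) (hv : Continuous v)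
    (hpos : ∀ u, 0 < v u) (hper : Function.Periodic v a) :
    ∃ φ : ℝ → ℝ, Function.LeftInverse φ (fun u => ∫ x in (0 : ℝ)..u, v x) ∧
      ∀ s, HasDerivAt φ (v (φ s))⁻¹ s := by
  set σ : ℝ → ℝ := fun u => ∫ x in (0 : ℝ)..u, v x
  have hσ (u : ℝ) : HasDerivAt σ (v u) u := hv.integral_hasStrictDerivAt 0 u |>.hasDerivAt
  have hσ_cont : Continuous σ := continuous_iff_continuousAt.2 fun u => (hσ u).continuousAt
  have hσ_surj : Function.Surjective σ := hσ_cont.surjective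
    (hper.tendsto_atTop_intervalIntegral_of_pos' (hv.intervalIntegrable _ _) hpos ha)
    (hper.tendsto_atBot_intervalIntegral_of_pos' (hv.intervalIntegrable _ _) hpos ha)
  let e := (strictMono_of_hasDerivAt_pos hσ hpos).orderIsoOfSurjective σ hσ_surj
  exact ⟨e.symm, e.symm_apply_apply, fun s =>
    .of_local_left_inverse e.symm.continuous.continuousAt (hσ _) (hpos _).ne'
      (.of_forall e.apply_symm_apply)⟩

theorem wirtinger_weighted {v : ℝ → ℝ} (ha : 0 < a) (hv : Continuous v) (hpos : ∀ u, 0 < v u)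
    (hvper : Function.Periodic v a) (hf : ∀ u, HasDerivAt f (f' u) u) (hf' : Continuous f')
    (hper : f a = f 0) (hmean : ∫ u in (0 : ℝ)..a, v u • f u = 0) :
    (2 * π) ^ 2 * ∫ u in (0 : ℝ)..a, ‖f u‖ ^ 2 * v u ≤
      (∫ u in (0 : ℝ)..a, v u) ^ 2 * ∫ u in (0 : ℝ)..a, ‖f' u‖ ^ 2 / v u := by
  obtain ⟨φ, hφ, hφ'⟩ := exists_hasDerivAt_leftInverse_integral ha hv hpos hvper
  have hφ_cont : Continuous φ := continuous_iff_continuousAt.2 fun s => (hφ' s).continuousAt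
  have hf_cont : Continuous f := continuous_iff_continuousAt.2 fun u => (hf u).continuousAt
  set L := ∫ u in (0 : ℝ)..a, v u
  have hLpos : 0 < L :=
    intervalIntegral.intervalIntegral_pos_of_pos (hv.intervalIntegrable _ _) hpos ha
  have hφL : φ L = a := hφ a
  have hφ0 : φ 0 = 0 := by simpa using hφ 0
  -- In the variable `s = ∫ v` the weight becomes constant and `d/ds` becomes `v⁻¹ d/du`.
  have change_var {E : Type} [NormedAddCommGroup E] [NormedSpace ℝ E] {h : ℝ → E}
      (hh : Continuous h) : ∫ s in (0 : ℝ)..L, h (φ s) = ∫ u in (0 : ℝ)..a, v u • h u := by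
    have := intervalIntegral.integral_deriv_smul_comp (a := 0) (b := a)
      (fun u _ => (hv.integral_hasStrictDerivAt 0 u).hasDerivAt) hv.continuousOn
      (hh.comp hφ_cont)
    simpa only [Function.comp_apply, hφ _, intervalIntegral.integral_same] using this.symm
  have hq : Continuous fun u => (v u)⁻¹ • f' u := (hv.inv₀ fun u => (hpos u).ne').smul hf'
  have key := wirtinger_interval hLpos (fun s _ => (hf (φ s)).scomp s (hφ' s))
    (hq.comp hφ_cont).continuousOn (by simp [hφL, hφ0, hper])
    ((change_var hf_cont).trans hmean)
  simp only [Function.comp_apply, sub_zero] at key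
  rw [change_var (h := fun u => ‖f u‖ ^ 2) (by fun_prop),
    change_var (h := fun u => ‖(v u)⁻¹ • f' u‖ ^ 2) (by fun_prop)] at key
  convert key using 4 with u u
  · rw [smul_eq_mul, mul_comm]
  · have := (hpos u).ne'
    rw [norm_smul, norm_inv, Real.norm_of_nonneg (hpos u).le, smul_eq_mul]
    field_simp

end Wirtinger

theorem innerP_self_pos {p : ℝ × ℝ} (hp : p ≠ 0) : 0 < innerP p p := by
  have : p.1 ≠ 0 ∨ p.2 ≠ 0 := by
    contrapose! hp
    exact Prod.ext hp.1 hp.2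
  rcases this with h | h
  · exact add_pos_of_pos_of_nonneg (mul_self_pos.2 h) (mul_self_nonneg _)
  · exact add_pos_of_nonneg_of_pos (mul_self_nonneg _) (mul_self_pos.2 h)

theorem hasDerivAt_innerP {F G : ℝ → ℝ × ℝ} {F' G' : ℝ × ℝ} {u : ℝ} (hF : HasDerivAt F F' u)
    (hG : HasDerivAt G G' u) :
    HasDerivAt (fun x => innerP (F x) (G x)) (innerP F' (G u) + innerP (F u) G') u := by
  have hF₁ : HasDerivAt (fun x => (F x).1) F'.1 u := by
    simpa using hF.hasFDerivAt.fst.hasDerivAt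
  have hF₂ : HasDerivAt (fun x => (F x).2) F'.2 u := by
    simpa using hF.hasFDerivAt.snd.hasDerivAt
  have hG₁ : HasDerivAt (fun x => (G x).1) G'.1 u := by
    simpa using hG.hasFDerivAt.fst.hasDerivAt
  have hG₂ : HasDerivAt (fun x => (G x).2) G'.2 u := by
    simpa using hG.hasFDerivAt.snd.hasDerivAt
  refine ((hF₁.mul hG₁).add (hF₂.mul hG₂)).congr_deriv ?_
  simp only [innerP]
  ring

theorem hasDerivAt_sqrt_innerP_self {F : ℝ → ℝ × ℝ} {F' : ℝ × ℝ} {u : ℝ} (hF : HasDerivAt F F' u)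
    (h0 : F u ≠ 0) :
    HasDerivAt (fun x => √(innerP (F x) (F x)))
      (innerP F' ((√(innerP (F u) (F u)))⁻¹ • F u)) u := by
  refine ((hasDerivAt_innerP hF hF).sqrt (innerP_self_pos h0).ne').congr_deriv ?_
  simp only [innerP, Prod.smul_fst, Prod.smul_snd, smul_eq_mul]
  ring

theorem contDiff_innerP {n : WithTop ℕ∞} :
    ContDiff ℝ n fun p : (ℝ × ℝ) × (ℝ × ℝ) => innerP p.1 p.2 := by
  unfold innerP
  fun_prop

section PlaneCurve

variable {c : ℝ → ℝ × ℝ} {f g : ℝ → ℝ} {n : WithTop ℕ∞} {a u : ℝ}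

/-- The unit tangent `τ = ∂_s γ`. -/
noncomputable def unitTangent (c : ℝ → ℝ × ℝ) : ℝ → ℝ × ℝ := arcDV c c

/-- The length of `c` over the parameter interval `[0, a]`. -/
noncomputable def arcLength (c : ℝ → ℝ × ℝ) (a : ℝ) : ℝ := ∫ u in (0 : ℝ)..a, speed c u

/-- The integral `∫ f ds` along `c` over the parameter interval `[0, a]`, where `ds = |c'| du`. -/
noncomputable def arcIntegral (c : ℝ → ℝ × ℝ) (a : ℝ) (f : ℝ → ℝ) : ℝ :=
  ∫ u in (0 : ℝ)..a, f u * speed c u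

theorem speed_eq_sqrt_innerP (c : ℝ → ℝ × ℝ) (u : ℝ) :
    speed c u = √(innerP (deriv c u) (deriv c u)) := by
  simp only [speed, innerP, sq]

theorem speed_pos (hreg : deriv c u ≠ 0) : 0 < speed c u := by
  rw [speed_eq_sqrt_innerP]
  exact Real.sqrt_pos.2 (innerP_self_pos hreg)

theorem speed_smul_unitTangent (hreg : deriv c u ≠ 0) : speed c u • unitTangent c u = deriv c u :=
  smul_inv_smul₀ (speed_pos hreg).ne' _

theorem arcD_mul_speed (hreg : deriv c u ≠ 0) : arcD c f u * speed c u = deriv f u := by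
  rw [arcD, mul_comm, mul_inv_cancel_left₀ (speed_pos hreg).ne']

theorem nuG_eq_rotate_unitTangent (c : ℝ → ℝ × ℝ) (u : ℝ) :
    nuG c u = ((unitTangent c u).2, -(unitTangent c u).1) := by
  simp only [nuG, unitTangent, arcDV, Prod.smul_fst, Prod.smul_snd, smul_eq_mul,
    div_eq_inv_mul, mul_neg]

theorem innerP_unitTangent_self (hreg : deriv c u ≠ 0) :
    innerP (unitTangent c u) (unitTangent c u) = 1 := by
  have hspeed : speed c u ^ 2 = innerP (deriv c u) (deriv c u) := by
    rw [speed_eq_sqrt_innerP, Real.sq_sqrt (innerP_self_pos hreg).le]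
  have h0 := (speed_pos hreg).ne'
  simp only [innerP, unitTangent, arcDV, Prod.smul_fst, Prod.smul_snd, smul_eq_mul] at hspeed ⊢
  field_simp
  linarith

theorem eq_innerP_smul_unitTangent_add_innerP_smul_nuG (hreg : deriv c u ≠ 0) (p : ℝ × ℝ) :
    p = innerP p (unitTangent c u) • unitTangent c u + innerP p (nuG c u) • nuG c u := by
  have hunit := innerP_unitTangent_self hreg
  simp only [nuG_eq_rotate_unitTangent, innerP] at hunit ⊢
  ext
  · simp only [Prod.fst_add, Prod.smul_fst, smul_eq_mul]
    linear_combination -p.1 * hunit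
  · simp only [Prod.snd_add, Prod.smul_snd, smul_eq_mul]
    linear_combination -p.2 * hunit

theorem innerP_smul_nuG_self (hreg : deriv c u ≠ 0) (k : ℝ) :
    innerP (k • nuG c u) (k • nuG c u) = k ^ 2 := by
  have hunit := innerP_unitTangent_self hreg
  simp only [nuG_eq_rotate_unitTangent, innerP, Prod.smul_fst, Prod.smul_snd,
    smul_eq_mul] at hunit ⊢
  linear_combination k ^ 2 * hunit

theorem contDiff_speed (hc : ContDiff ℝ (n + 1) c) (hreg : ∀ u, deriv c u ≠ 0) :
    ContDiff ℝ n (speed c) := by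
  rw [funext (speed_eq_sqrt_innerP c)]
  exact (contDiff_innerP.comp (hc.deriv'.prodMk hc.deriv')).sqrt
    fun u => (innerP_self_pos (hreg u)).ne'

theorem contDiff_arcD (hc : ContDiff ℝ (n + 1) c) (hreg : ∀ u, deriv c u ≠ 0)
    (hf : ContDiff ℝ (n + 1) f) : ContDiff ℝ n (arcD c f) :=
  ((contDiff_speed hc hreg).inv fun u => (speed_pos (hreg u)).ne').mul hf.deriv'

theorem contDiff_unitTangent (hc : ContDiff ℝ (n + 1) c) (hreg : ∀ u, deriv c u ≠ 0) :
    ContDiff ℝ n (unitTangent c) :=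
  ((contDiff_speed hc hreg).inv fun u => (speed_pos (hreg u)).ne').smul hc.deriv'

theorem contDiff_nuG (hc : ContDiff ℝ (n + 1) c) (hreg : ∀ u, deriv c u ≠ 0) :
    ContDiff ℝ n (nuG c) := by
  rw [funext (nuG_eq_rotate_unitTangent c)]
  have hτ := contDiff_unitTangent hc hreg
  exact hτ.snd.prodMk hτ.fst.neg

theorem contDiff_curvG (hc : ContDiff ℝ (n + 2) c) (hreg : ∀ u, deriv c u ≠ 0) :
    ContDiff ℝ n (curvG c) := by
  have hc' : ContDiff ℝ (n + 1 + 1) c := by rwa [add_assoc, one_add_one_eq_two]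
  have hc₁ : ContDiff ℝ (n + 1) c := hc'.of_le le_self_add
  have hττ : ContDiff ℝ n (arcDV c (arcDV c c)) :=
    ((contDiff_speed hc₁ hreg).inv fun u => (speed_pos (hreg u)).ne').smul
      (contDiff_unitTangent hc' hreg).deriv'
  exact contDiff_innerP.comp (hττ.prodMk (contDiff_nuG hc₁ hreg))

theorem periodic_deriv {E : Type*} [NormedAddCommGroup E] [NormedSpace ℝ E] {F : ℝ → E}
    (hF : Function.Periodic F a) : Function.Periodic (deriv F) a := fun u => by
  rw [← deriv_comp_add_const, hF.funext]

section Periodic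

variable (hper : Function.Periodic c a)
include hper

theorem periodic_speed : Function.Periodic (speed c) a := fun u => by
  simp only [speed, periodic_deriv hper u]

theorem periodic_arcD (hf : Function.Periodic f a) : Function.Periodic (arcD c f) a := fun u => by
  simp only [arcD, periodic_speed hper u, periodic_deriv hf u]

theorem periodic_arcDV {F : ℝ → ℝ × ℝ} (hF : Function.Periodic F a) :
    Function.Periodic (arcDV c F) a := fun u => by
  simp only [arcDV, periodic_speed hper u, periodic_deriv hF u]

theorem periodic_curvG : Function.Periodic (curvG c) a := fun u => by
  simp only [curvG, nuG, periodic_arcDV hper (periodic_arcDV hper hper) u, periodic_speed hper u,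
    periodic_deriv hper u]

end Periodic

theorem hasDerivAt_unitTangent (hc : ContDiff ℝ 2 c) (hreg : ∀ u, deriv c u ≠ 0) (u : ℝ) :
    HasDerivAt (unitTangent c) ((speed c u * curvG c u) • nuG c u) u := by
  have hτ : HasDerivAt (unitTangent c) (deriv (unitTangent c) u) u :=
    ((contDiff_unitTangent (n := 1) hc hreg).differentiable one_ne_zero u).hasDerivAt
  have htangential : innerP (deriv (unitTangent c) u) (unitTangent c u) = 0 := by
    have hunit : HasDerivAt (fun x => innerP (unitTangent c x) (unitTangent c x)) 0 u := by
      simp only [innerP_unitTangent_self (hreg _), hasDerivAt_const]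
    have := (hasDerivAt_innerP hτ hτ).unique hunit
    simp only [innerP] at this ⊢
    linarith
  have hnormal : innerP (deriv (unitTangent c) u) (nuG c u) = speed c u * curvG c u := by
    have h0 := (speed_pos (hreg u)).ne'
    simp only [curvG, innerP, arcDV, unitTangent, Prod.smul_fst, Prod.smul_snd, smul_eq_mul]
    field_simp
  convert hτ using 1
  rw [eq_innerP_smul_unitTangent_add_innerP_smul_nuG (hreg u) (deriv (unitTangent c) u),
    htangential, hnormal, zero_smul, zero_add]

theorem arcDV_unitTangent (hc : ContDiff ℝ 2 c) (hreg : ∀ u, deriv c u ≠ 0) (u : ℝ) :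
    arcDV c (unitTangent c) u = curvG c u • nuG c u := by
  rw [arcDV, (hasDerivAt_unitTangent hc hreg u).deriv, mul_smul,
    inv_smul_smul₀ (speed_pos (hreg u)).ne']

theorem arcLength_pos (hc : ContDiff ℝ 1 c) (hreg : ∀ u, deriv c u ≠ 0) (ha : 0 < a) :
    0 < arcLength c a :=
  intervalIntegral.intervalIntegral_pos_of_pos
    ((contDiff_speed (n := 0) hc hreg).continuous.intervalIntegrable _ _)
    (fun u => speed_pos (hreg u)) ha

theorem arcIntegral_mul_arcD (hreg : ∀ u, deriv c u ≠ 0) (hf : ContDiff ℝ 1 f)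
    (hg : ContDiff ℝ 1 g) (hfa : f a = f 0) (hga : g a = g 0) :
    arcIntegral c a (fun u => f u * arcD c g u) = -arcIntegral c a (fun u => arcD c f u * g u) := by
  have hderiv {h : ℝ → ℝ} (hh : ContDiff ℝ 1 h) (u : ℝ) : HasDerivAt h (deriv h u) u :=
    (hh.differentiable one_ne_zero u).hasDerivAt
  have hparts := intervalIntegral.integral_mul_deriv_eq_deriv_mul
    (fun u _ => hderiv hf u) (fun u _ => hderiv hg u)
    (hf.continuous_deriv_one.intervalIntegrable 0 a)
    (hg.continuous_deriv_one.intervalIntegrable 0 a)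
  rw [hfa, hga, sub_self, zero_sub] at hparts
  simp only [arcIntegral, mul_assoc, mul_right_comm _ (g _), arcD_mul_speed (hreg _)]
  simpa only [mul_comm] using hparts

theorem wirtinger_arcIntegral (hc : ContDiff ℝ 1 c) (hreg : ∀ u, deriv c u ≠ 0)
    (hper : Function.Periodic c a) (ha : 0 < a) (hf : ContDiff ℝ 1 f) (hfa : f a = f 0)
    (hmean : arcIntegral c a f = 0) :
    (2 * π) ^ 2 * arcIntegral c a (fun u => f u ^ 2) ≤
      arcLength c a ^ 2 * arcIntegral c a (fun u => arcD c f u ^ 2) := by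
  have key := wirtinger_weighted ha (contDiff_speed (n := 0) hc hreg).continuous
    (fun u => speed_pos (hreg u)) (periodic_speed hper)
    (fun u => (hf.differentiable one_ne_zero u).hasDerivAt.ofReal_comp)
    (Complex.continuous_ofReal.comp hf.continuous_deriv_one) (congrArg _ hfa) (by
      simpa only [Complex.real_smul, ← Complex.ofReal_mul, intervalIntegral.integral_ofReal,
        Complex.ofReal_eq_zero, mul_comm, arcIntegral] using hmean)
  have hderiv (u : ℝ) : deriv f u ^ 2 / speed c u = arcD c f u ^ 2 * speed c u := by
    have h0 := (speed_pos (hreg u)).ne'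
    rw [← arcD_mul_speed (hreg u)]
    field_simp
  simpa only [arcLength, arcIntegral, Complex.norm_real, Real.norm_eq_abs, sq_abs, hderiv] using key

theorem wirtinger_arcIntegral_innerP_self (hc : ContDiff ℝ 1 c) (hreg : ∀ u, deriv c u ≠ 0)
    (hper : Function.Periodic c a) (ha : 0 < a) {F : ℝ → ℝ × ℝ} (hF : ContDiff ℝ 1 F)
    (hFa : F a = F 0) (hmean : ∫ u in (0 : ℝ)..a, speed c u • F u = 0) :
    (2 * π) ^ 2 * arcIntegral c a (fun u => innerP (F u) (F u)) ≤
      arcLength c a ^ 2 * arcIntegral c a (fun u => innerP (arcDV c F u) (arcDV c F u)) := by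
  let e : (ℝ × ℝ) ≃L[ℝ] ℂ := Complex.equivRealProdCLM.symm
  have norm_sq_e (p : ℝ × ℝ) : ‖e p‖ ^ 2 = innerP p p := by
    rw [Complex.sq_norm, Complex.normSq_apply]
    rfl
  have he_mean : ∫ u in (0 : ℝ)..a, speed c u • e (F u) = 0 := by
    have hint : Continuous fun u => speed c u • F u :=
      (contDiff_speed (n := 0) hc hreg).continuous.smul hF.continuous
    have := e.toContinuousLinearMap.intervalIntegral_comp_comm
      (hint.intervalIntegrable (μ := volume) 0 a)
    simpa only [ContinuousLinearEquiv.coe_coe, map_smul, hmean, map_zero] using this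
  have key := wirtinger_weighted ha (contDiff_speed (n := 0) hc hreg).continuous
    (fun u => speed_pos (hreg u)) (periodic_speed hper)
    (fun u => e.hasFDerivAt.comp_hasDerivAt u (hF.differentiable one_ne_zero u).hasDerivAt)
    (e.continuous.comp hF.continuous_deriv_one) (congrArg e hFa) he_mean
  have hderiv (u : ℝ) : innerP (deriv F u) (deriv F u) / speed c u =
      innerP (arcDV c F u) (arcDV c F u) * speed c u := by
    have h0 := (speed_pos (hreg u)).ne'
    simp only [innerP, arcDV, Prod.smul_fst, Prod.smul_snd, smul_eq_mul]
    field_simp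
  simpa only [arcLength, arcIntegral, Function.comp_apply, ContinuousLinearEquiv.coe_coe,
    norm_sq_e, hderiv] using key

theorem two_pi_sq_le_arcLength_mul_arcIntegral_curvG_sq (hc : ContDiff ℝ 2 c)
    (hreg : ∀ u, deriv c u ≠ 0) (hper : Function.Periodic c a) (ha : 0 < a) :
    (2 * π) ^ 2 ≤ arcLength c a * arcIntegral c a (fun u => curvG c u ^ 2) := by
  have hc₁ : ContDiff ℝ 1 c := hc.of_le one_le_two
  have hτ_mean : ∫ u in (0 : ℝ)..a, speed c u • unitTangent c u = 0 := by
    simp only [speed_smul_unitTangent (hreg _)]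
    rw [intervalIntegral.integral_eq_sub_of_hasDerivAt
      (fun u _ => (hc₁.differentiable one_ne_zero u).hasDerivAt)
      (hc₁.continuous_deriv_one.intervalIntegrable _ _), hper.eq, sub_self]
  have key := wirtinger_arcIntegral_innerP_self hc₁ hreg hper ha (contDiff_unitTangent hc hreg)
    (periodic_arcDV hper hper).eq hτ_mean
  have hτ_sq : arcIntegral c a (fun u => innerP (unitTangent c u) (unitTangent c u)) =
      arcLength c a := by
    simp only [arcIntegral, innerP_unitTangent_self (hreg _), one_mul, arcLength]
  simp only [hτ_sq, arcDV_unitTangent hc hreg, innerP_smul_nuG_self (hreg _)] at key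
  refine le_of_mul_le_mul_right ?_ (arcLength_pos hc₁ hreg ha)
  linarith

theorem two_pi_pow_four_le_arcLength_cube_mul (hc : ContDiff ℝ 3 c) (hreg : ∀ u, deriv c u ≠ 0)
    (hper : Function.Periodic c a) (ha : 0 < a) (hwind : arcIntegral c a (curvG c) = 0) :
    (2 * π) ^ 4 ≤ arcLength c a ^ 3 * arcIntegral c a (fun u => curvGS c u ^ 2) := by
  have hc₁ : ContDiff ℝ 1 c := hc.of_le (by norm_num)
  have hc₂ : ContDiff ℝ 2 c := hc.of_le (by norm_num)
  have hκ : ContDiff ℝ 1 (curvG c) := contDiff_curvG hc hreg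
  have hL := (arcLength_pos hc₁ hreg ha).le
  calc (2 * π) ^ 4 = (2 * π) ^ 2 * (2 * π) ^ 2 := by ring
    _ ≤ (2 * π) ^ 2 * (arcLength c a * arcIntegral c a (fun u => curvG c u ^ 2)) := by
      gcongr
      exact two_pi_sq_le_arcLength_mul_arcIntegral_curvG_sq hc₂ hreg hper ha
    _ = arcLength c a * ((2 * π) ^ 2 * arcIntegral c a (fun u => curvG c u ^ 2)) := by ring
    _ ≤ arcLength c a * (arcLength c a ^ 2 * arcIntegral c a (fun u => curvGS c u ^ 2)) :=
      mul_le_mul_of_nonneg_left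
        (wirtinger_arcIntegral hc₁ hreg hper ha hκ (periodic_curvG hper).eq hwind) hL
    _ = arcLength c a ^ 3 * arcIntegral c a (fun u => curvGS c u ^ 2) := by ring

theorem integral_innerP_deriv_unitTangent (hc : ContDiff ℝ 2 c) (hreg : ∀ u, deriv c u ≠ 0)
    (hper : Function.Periodic c a) {V : ℝ → ℝ × ℝ} (hV : ContDiff ℝ 1 V) (hVa : V a = V 0) :
    ∫ u in (0 : ℝ)..a, innerP (deriv V u) (unitTangent c u) =
      -arcIntegral c a (fun u => curvG c u * innerP (V u) (nuG c u)) := by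
  have hc₁ : ContDiff ℝ 1 c := hc.of_le one_le_two
  have hspeed := (contDiff_speed (n := 0) hc₁ hreg).continuous
  have hτ := (contDiff_unitTangent (n := 0) hc₁ hreg).continuous
  have hν := (contDiff_nuG (n := 0) hc₁ hreg).continuous
  have hκ := (contDiff_curvG (n := 0) hc hreg).continuous
  have hV' := hV.continuous_deriv_one
  have hinner := (contDiff_innerP (n := 0)).continuous
  have hderiv (u : ℝ) : HasDerivAt (fun x => innerP (V x) (unitTangent c x))
      (innerP (deriv V u) (unitTangent c u) +
        curvG c u * innerP (V u) (nuG c u) * speed c u) u := by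
    refine (hasDerivAt_innerP (hV.differentiable one_ne_zero u).hasDerivAt
      (hasDerivAt_unitTangent hc hreg u)).congr_deriv ?_
    simp only [innerP, Prod.smul_fst, Prod.smul_snd, smul_eq_mul]
    ring
  have hint₁ : Continuous fun u => innerP (deriv V u) (unitTangent c u) :=
    hinner.comp (hV'.prodMk hτ)
  have hint₂ : Continuous fun u => curvG c u * innerP (V u) (nuG c u) * speed c u :=
    (hκ.mul (hinner.comp (hV.continuous.prodMk hν))).mul hspeed
  have hclosed := intervalIntegral.integral_eq_sub_of_hasDerivAt (a := 0) (b := a)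
    (fun u _ => hderiv u) ((hint₁.add hint₂).intervalIntegrable _ _)
  have hτa : unitTangent c a = unitTangent c 0 := (periodic_arcDV hper hper).eq
  rw [hVa, hτa, sub_self, intervalIntegral.integral_add (hint₁.intervalIntegrable _ _)
    (hint₂.intervalIntegrable _ _)] at hclosed
  exact eq_neg_of_add_eq_zero_left hclosed

theorem integral_innerP_deriv_unitTangent_of_curveDiffusion (hc : ContDiff ℝ 4 c)
    (hreg : ∀ u, deriv c u ≠ 0) (hper : Function.Periodic c a) {V : ℝ → ℝ × ℝ}
    (hV : ContDiff ℝ 1 V) (hVa : V a = V 0) (hflow : ∀ u, innerP (V u) (nuG c u) = -curvGSS c u) :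
    ∫ u in (0 : ℝ)..a, innerP (deriv V u) (unitTangent c u) =
      -arcIntegral c a (fun u => curvGS c u ^ 2) := by
  have hκ : ContDiff ℝ 2 (curvG c) := contDiff_curvG (hc.of_le (by norm_num)) hreg
  have hκs : ContDiff ℝ 1 (curvGS c) := contDiff_arcD (hc.of_le (by norm_num)) hreg hκ
  have hκper : Function.Periodic (curvG c) a := periodic_curvG hper
  calc ∫ u in (0 : ℝ)..a, innerP (deriv V u) (unitTangent c u)
      = -arcIntegral c a (fun u => curvG c u * innerP (V u) (nuG c u)) :=
        integral_innerP_deriv_unitTangent (hc.of_le (by norm_num)) hreg hper hV hVa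
    _ = arcIntegral c a (fun u => curvG c u * arcD c (curvGS c) u) := by
        simp only [hflow, arcIntegral, mul_neg, neg_mul, intervalIntegral.integral_neg, neg_neg,
          curvGSS]
    _ = -arcIntegral c a (fun u => curvGS c u ^ 2) := by
        rw [arcIntegral_mul_arcD hreg (hκ.of_le one_le_two) hκs hκper.eq
          (periodic_arcD hper hκper).eq]
        simp only [curvGS, sq]

end PlaneCurve

section Slice

variable {E : Type*} [NormedAddCommGroup E] [NormedSpace ℝ E] {γ : ℝ → ℝ → E} {I : Set ℝ}
  {n : WithTop ℕ∞} {u t : ℝ}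

theorem contDiff_slice (hγ : ContDiffOn ℝ n (Function.uncurry γ) (Set.univ ×ˢ I)) (ht : t ∈ I) :
    ContDiff ℝ n fun u => γ u t :=
  hγ.comp_contDiff (contDiff_prodMk_left t) fun u => ⟨Set.mem_univ u, ht⟩

theorem hasDerivAt_slice_fst {γ' : ℝ × ℝ →L[ℝ] E} (ht : t ∈ I)
    (hγ : HasFDerivWithinAt (Function.uncurry γ) γ' (Set.univ ×ˢ I) (u, t)) :
    HasDerivAt (fun u' => γ u' t) (γ' (1, 0)) u :=
  hγ.comp_hasDerivAt (f := fun u' => (u', t)) u ((hasDerivAt_id u).prodMk (hasDerivAt_const u t))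
    (.of_forall fun u' => ⟨Set.mem_univ u', ht⟩)

theorem hasDerivAt_slice_snd {γ' : ℝ × ℝ →L[ℝ] E}
    (hγ : HasFDerivAt (Function.uncurry γ) γ' (u, t)) : HasDerivAt (γ u) (γ' (0, 1)) t :=
  hγ.comp_hasDerivAt (f := fun t' => (u, t')) t ((hasDerivAt_const t u).prodMk (hasDerivAt_id t))

theorem contDiffOn_deriv_fst (hI : UniqueDiffOn ℝ I)
    (hγ : ContDiffOn ℝ (n + 1) (Function.uncurry γ) (Set.univ ×ˢ I)) :
    ContDiffOn ℝ n (fun p => deriv (fun u => γ u p.2) p.1) (Set.univ ×ˢ I) := by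
  refine ((hγ.fderivWithin (uniqueDiffOn_univ.prod hI) le_rfl).clm_apply
    (contDiffOn_const (c := ((1 : ℝ), (0 : ℝ))))).congr fun p hp => ?_
  exact (hasDerivAt_slice_fst hp.2
    (hγ.differentiableOn (by simp) p hp).hasFDerivWithinAt).deriv

theorem contDiffOn_deriv_snd (hI : IsOpen I)
    (hγ : ContDiffOn ℝ (n + 1) (Function.uncurry γ) (Set.univ ×ˢ I)) :
    ContDiffOn ℝ n (fun p => deriv (γ p.1) p.2) (Set.univ ×ˢ I) := by
  have hopen : IsOpen (Set.univ ×ˢ I : Set (ℝ × ℝ)) := isOpen_univ.prod hI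
  refine ((hγ.fderiv_of_isOpen hopen le_rfl).clm_apply
    (contDiffOn_const (c := ((0 : ℝ), (1 : ℝ))))).congr fun p hp => ?_
  exact (hasDerivAt_slice_snd ((hγ.differentiableOn (by simp)).differentiableAt
    (hopen.mem_nhds hp)).hasFDerivAt).deriv

theorem hasDerivAt_deriv_fst_slice_snd (hγ : ContDiffAt ℝ 2 (Function.uncurry γ) (u, t)) :
    HasDerivAt (fun t' => deriv (fun u' => γ u' t') u)
      (deriv (fun u' => deriv (γ u') t) u) t := by
  set G := Function.uncurry γ
  have hdiff : ∀ᶠ p in nhds (u, t), HasFDerivAt G (fderiv ℝ G p) p :=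
    (hγ.eventually (by simp)).mono fun p hp => (hp.differentiableAt two_ne_zero).hasFDerivAt
  have hG' : HasFDerivAt (fderiv ℝ G) (fderiv ℝ (fderiv ℝ G) (u, t)) (u, t) :=
    ((hγ.fderiv_right (m := 1) (by norm_num)).differentiableAt one_ne_zero).hasFDerivAt
  have htu : HasDerivAt (fun t' => fderiv ℝ G (u, t') (1, 0))
      (fderiv ℝ (fderiv ℝ G) (u, t) (0, 1) (1, 0)) t := by
    simpa using (hasDerivAt_slice_snd (γ := fun u t => fderiv ℝ G (u, t)) hG').clm_apply
      (hasDerivAt_const t ((1 : ℝ), (0 : ℝ)))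
  have hut : HasDerivAt (fun u' => fderiv ℝ G (u', t) (0, 1))
      (fderiv ℝ (fderiv ℝ G) (u, t) (1, 0) (0, 1)) u := by
    simpa using (hasDerivAt_slice_fst (γ := fun u t => fderiv ℝ G (u, t)) (Set.mem_univ t)
      hG'.hasFDerivWithinAt).clm_apply (hasDerivAt_const u ((0 : ℝ), (1 : ℝ)))
  have hut' : HasDerivAt (fun u' => deriv (γ u') t)
      (fderiv ℝ (fderiv ℝ G) (u, t) (1, 0) (0, 1)) u := by
    refine hut.congr_of_eventuallyEq ?_
    filter_upwards [(Continuous.prodMk_left t).continuousAt.eventually hdiff] with u' hu'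
    exact (hasDerivAt_slice_snd hu').deriv
  rw [hut'.deriv, hγ.isSymmSndFDerivAt (by simp) (1, 0) (0, 1)]
  refine htu.congr_of_eventuallyEq ?_
  filter_upwards [(Continuous.prodMk_right u).continuousAt.eventually hdiff] with t' ht'
  exact (hasDerivAt_slice_fst (Set.mem_univ t') ht'.hasFDerivWithinAt).deriv

theorem hasDerivAt_integral_slice (hI : IsOpen I)
    (hγ : ContDiffOn ℝ 1 (Function.uncurry γ) (Set.univ ×ˢ I)) (ht : t ∈ I) (a b : ℝ) :
    HasDerivAt (fun t' => ∫ u in a..b, γ u t') (∫ u in a..b, deriv (γ u) t) t := by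
  obtain ⟨K, hK, htK, hKI⟩ := exists_compact_subset hI ht
  have hγt : ContDiffOn ℝ 0 (fun p : ℝ × ℝ => deriv (γ p.1) p.2) (Set.univ ×ˢ I) :=
    contDiffOn_deriv_snd hI (by simpa using hγ)
  obtain ⟨C, hC⟩ := ((isCompact_uIcc (a := a) (b := b)).prod hK).exists_bound_of_continuousOn
    (hγt.continuousOn.mono (Set.prod_mono (Set.subset_univ _) hKI))
  refine (intervalIntegral.hasDerivAt_integral_of_dominated_loc_of_deriv_le
    (F := fun t' u => γ u t') (F' := fun t' u => deriv (γ u) t') (bound := fun _ => C)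
    (mem_interior_iff_mem_nhds.1 htK) ?_ ?_ ?_ ?_ intervalIntegrable_const ?_).2
  · filter_upwards [hI.mem_nhds ht] with t' ht'
    exact (contDiff_slice hγ ht').continuous.aestronglyMeasurable
  · exact (contDiff_slice hγ ht).continuous.intervalIntegrable _ _
  · exact (contDiff_slice (γ := fun u t => deriv (γ u) t) hγt ht).continuous.aestronglyMeasurable
  · exact .of_forall fun u hu t' ht' => hC (u, t') ⟨Set.uIoc_subset_uIcc hu, ht'⟩
  · refine .of_forall fun u _ t' ht' => ?_
    have hdiff : DifferentiableAt ℝ (Function.uncurry γ) (u, t') :=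
      (hγ.differentiableOn one_ne_zero).differentiableAt
        ((isOpen_univ.prod hI).mem_nhds ⟨Set.mem_univ u, hKI ht'⟩)
    exact (hasDerivAt_slice_snd hdiff.hasFDerivAt).differentiableAt.hasDerivAt

end Slice

section Evolution

variable {γ : ℝ → ℝ → ℝ × ℝ} {I : Set ℝ} {T t : ℝ}

theorem continuousOn_clen (hI : UniqueDiffOn ℝ I)
    (hγ : ContDiffOn ℝ 1 (Function.uncurry γ) (Set.univ ×ˢ I)) : ContinuousOn (clen γ) I := by
  have hγu : ContDiffOn ℝ 0 (fun p : ℝ × ℝ => deriv (fun u => γ u p.2) p.1) (Set.univ ×ˢ I) :=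
    contDiffOn_deriv_fst hI (by simpa using hγ)
  have hspeed : Continuous (Function.uncurry fun (t : I) u => speed (fun u' => γ u' t) u) := by
    have hslice : Continuous fun p : I × ℝ => deriv (fun u' => γ u' p.1) p.2 :=
      hγu.continuousOn.comp_continuous (f := fun p : I × ℝ => (p.2, (p.1 : ℝ))) (by fun_prop)
        fun p => ⟨Set.mem_univ p.2, p.1.2⟩
    simp only [Function.uncurry_def, speed]
    fun_prop
  rw [continuousOn_iff_continuous_domRestrict]
  exact intervalIntegral.continuous_parametric_intervalIntegral_of_continuous' hspeed 0 (2 * π)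

theorem hasDerivAt_clen (hI : IsOpen I)
    (hγ : ContDiffOn ℝ 2 (Function.uncurry γ) (Set.univ ×ˢ I))
    (hreg : ∀ u, ∀ t ∈ I, deriv (fun u' => γ u' t) u ≠ 0) (ht : t ∈ I) :
    HasDerivAt (clen γ) (∫ u in (0 : ℝ)..(2 * π),
      innerP (deriv (fun u' => deriv (γ u') t) u) (unitTangent (fun u' => γ u' t) u)) t := by
  have hγu : ContDiffOn ℝ 1 (fun p : ℝ × ℝ => deriv (fun u => γ u p.2) p.1) (Set.univ ×ˢ I) :=
    contDiffOn_deriv_fst hI.uniqueDiffOn (by simpa [one_add_one_eq_two] using hγ)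
  have hspeed : ContDiffOn ℝ 1 (Function.uncurry fun u t => speed (fun u' => γ u' t) u)
      (Set.univ ×ˢ I) := by
    simp only [speed_eq_sqrt_innerP]
    exact (contDiff_innerP.comp_contDiffOn (hγu.prodMk hγu)).sqrt
      fun p hp => (innerP_self_pos (hreg p.1 p.2 hp.2)).ne'
  refine (hasDerivAt_integral_slice hI hspeed ht 0 (2 * π)).congr_deriv
    (intervalIntegral.integral_congr fun u _ => ?_)
  have hat : ContDiffAt ℝ 2 (Function.uncurry γ) (u, t) :=
    hγ.contDiffAt ((isOpen_univ.prod hI).mem_nhds ⟨Set.mem_univ u, ht⟩)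
  simp only [speed_eq_sqrt_innerP, unitTangent, arcDV]
  exact (hasDerivAt_sqrt_innerP_self (hasDerivAt_deriv_fst_slice_snd hat) (hreg u t ht)).deriv

/-- `γ` solves the curve diffusion flow `⟨∂_t γ, ν⟩ = -κ_ss` through `2π`-periodic regular curves
for times in `I`. Four derivatives are required, which is what the equation involves. -/
structure IsCurveDiffusionFlow (γ : ℝ → ℝ → ℝ × ℝ) (I : Set ℝ) : Prop where
  contDiffOn : ContDiffOn ℝ 4 (Function.uncurry γ) (Set.univ ×ˢ I)
  periodic : ∀ t ∈ I, Function.Periodic (fun u => γ u t) (2 * π)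
  regular : ∀ u, ∀ t ∈ I, deriv (fun u' => γ u' t) u ≠ 0
  normal_velocity : ∀ u, ∀ t ∈ I,
    innerP (deriv (γ u) t) (nuG (fun u' => γ u' t) u) = -curvGSS (fun u' => γ u' t) u

namespace IsCurveDiffusionFlow

theorem hasDerivAt_clen (hγ : IsCurveDiffusionFlow γ I) (hI : IsOpen I) (ht : t ∈ I) :
    HasDerivAt (clen γ)
      (-arcIntegral (fun u => γ u t) (2 * π) (fun u => curvGS (fun u' => γ u' t) u ^ 2)) t := by
  have hV : ContDiff ℝ 1 fun u => deriv (γ u) t :=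
    contDiff_slice (γ := fun u t => deriv (γ u) t)
      (contDiffOn_deriv_snd hI (hγ.contDiffOn.of_le (by norm_num))) ht
  have hV_closed : deriv (γ (2 * π)) t = deriv (γ 0) t := by
    refine EventuallyEq.deriv_eq ?_
    filter_upwards [hI.mem_nhds ht] with t' ht' using (hγ.periodic t' ht').eq
  rw [← integral_innerP_deriv_unitTangent_of_curveDiffusion (contDiff_slice hγ.contDiffOn ht)
    (fun u => hγ.regular u t ht) (hγ.periodic t ht) hV hV_closed
    (fun u => hγ.normal_velocity u t ht)]
  exact _root_.hasDerivAt_clen hI (hγ.contDiffOn.of_le (by norm_num)) hγ.regular ht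

theorem deriv_clen_pow_four_le (hγ : IsCurveDiffusionFlow γ I) (hI : IsOpen I) (ht : t ∈ I)
    (hwind : arcIntegral (fun u => γ u t) (2 * π) (curvG fun u => γ u t) = 0) :
    deriv (fun t => clen γ t ^ 4) t ≤ -(64 * π ^ 4) := by
  rw [((hγ.hasDerivAt_clen hI ht).fun_pow 4).deriv]
  have hc : ContDiff ℝ 3 fun u => γ u t :=
    (contDiff_slice hγ.contDiffOn ht).of_le (by norm_num)
  have hdissipation := two_pi_pow_four_le_arcLength_cube_mul hc (fun u => hγ.regular u t ht)
    (hγ.periodic t ht) two_pi_pos hwind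
  have hlength : arcLength (fun u => γ u t) (2 * π) = clen γ t := rfl
  rw [hlength] at hdissipation
  push_cast
  linarith

theorem clen_pow_four_le (hγ : IsCurveDiffusionFlow γ (Set.Ioo 0 T))
    (hcont : ContinuousOn (clen γ) (Set.Ico 0 T))
    (hwind : ∀ t ∈ Set.Ioo 0 T, arcIntegral (fun u => γ u t) (2 * π) (curvG fun u => γ u t) = 0)
    (ht : t ∈ Set.Ico 0 T) : clen γ t ^ 4 ≤ clen γ 0 ^ 4 - 64 * π ^ 4 * t := by
  have hmem {t' : ℝ} (ht' : t' ∈ interior (Set.Icc 0 t)) : t' ∈ Set.Ioo 0 T := by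
    rw [interior_Icc] at ht'
    exact ⟨ht'.1, ht'.2.trans ht.2⟩
  have hdecay : clen γ t ^ 4 - clen γ 0 ^ 4 ≤ -(64 * π ^ 4) * (t - 0) :=
    (convex_Icc 0 t).image_sub_le_mul_sub_of_deriv_le
      ((hcont.mono (Set.Icc_subset_Ico_right ht.2)).pow 4)
      (fun t' ht' => ((hγ.hasDerivAt_clen isOpen_Ioo (hmem ht')).fun_pow
        4).differentiableAt.differentiableWithinAt)
      (fun t' ht' => hγ.deriv_clen_pow_four_le isOpen_Ioo (hmem ht') (hwind t' (hmem ht')))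
      0 (Set.left_mem_Icc.2 ht.1) t (Set.right_mem_Icc.2 ht.1) ht.1
  linarith

end IsCurveDiffusionFlow

end Evolution

theorem curve_diffusion_maximal_time_bound_general {T : ℝ} {γ : ℝ → ℝ → ℝ × ℝ}
    (hγ : IsCurveDiffusionFlow γ (Set.Ioo 0 T)) (hcont : ContinuousOn (clen γ) (Set.Ico 0 T))
    (hwind : ∀ t ∈ Set.Ioo 0 T, arcIntegral (fun u => γ u t) (2 * π) (curvG fun u => γ u t) = 0) :
    T ≤ clen γ 0 ^ 4 / (64 * π ^ 4) := by
  have hbound : 0 ≤ clen γ 0 ^ 4 / (64 * π ^ 4) := by positivity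
  refine le_of_forall_lt_imp_le_of_dense fun t ht => ?_
  rcases lt_or_ge t 0 with hneg | hnonneg
  · exact hneg.le.trans hbound
  · have hdecay := hγ.clen_pow_four_le hcont hwind ⟨hnonneg, ht⟩
    have hfinal : 0 ≤ clen γ t ^ 4 := by positivity
    rw [le_div_iff₀ (by positivity)]
    linarith

/-- Escher–Ito–Polden bound: a curve diffusion flow of closed curves whose
curves all have winding number zero satisfies `T ≤ L(0)⁴ / (64 π⁴)`. -/
theorem curve_diffusion_maximal_time_bound
    (T : ℝ) (hT : 0 < T) (γ : ℝ → ℝ → ℝ × ℝ)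
    (hsmooth : ContDiffOn ℝ (⊤ : ℕ∞) (fun p : ℝ × ℝ => γ p.1 p.2) (Set.univ ×ˢ Set.Ico 0 T))
    (hper : ∀ u : ℝ, ∀ t ∈ Set.Ico (0:ℝ) T, γ (u + 2 * Real.pi) t = γ u t)
    (hreg : ∀ u : ℝ, ∀ t ∈ Set.Ico (0:ℝ) T, deriv (fun u' => γ u' t) u ≠ 0)
    (hflow : ∀ u : ℝ, ∀ t ∈ Set.Ico (0:ℝ) T,
      innerP (deriv (fun t' => γ u t') t) (nuG (fun u' => γ u' t) u)
        = - curvGSS (fun u' => γ u' t) u)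
    (hwind : ∀ t ∈ Set.Ico (0:ℝ) T,
      ∫ u in (0:ℝ)..(2 * Real.pi), curvG (fun u' => γ u' t) u * speed (fun u' => γ u' t) u = 0) :
    T ≤ (clen γ 0) ^ 4 / (64 * Real.pi ^ 4) := by
  have hsub : Set.Ioo 0 T ⊆ Set.Ico 0 T := Set.Ioo_subset_Ico_self
  exact curve_diffusion_maximal_time_bound_general
    ⟨(contDiffOn_infty.1 hsmooth 4).mono (Set.prod_mono_right hsub),
      fun t ht u => hper u t (hsub ht), fun u t ht => hreg u t (hsub ht),
      fun u t ht => hflow u t (hsub ht)⟩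
    (continuousOn_clen (uniqueDiffOn_Ico 0 T) (contDiffOn_infty.1 hsmooth 1))
    fun t ht => hwind t (hsub ht)
end

section
/- Let γ : ℝ → ℝ² be a smooth closed regular plane curve parametrised by arc length with period L > 0, with curvature κ. Then ∫₀^L |κ(s)| ds ≥ 2π. -/
open Real MeasureTheory Filter

/-- Unit normal `ν = (y', -x')` of a plane curve parametrised by arc length. -/
noncomputable def nuA (γ : ℝ → ℝ × ℝ) (s : ℝ) : ℝ × ℝ :=
  ((deriv γ s).2, -(deriv γ s).1)

/-- Curvature `κ = ⟨γ'', ν⟩` of a plane curve parametrised by arc length. -/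
noncomputable def curvA (γ : ℝ → ℝ × ℝ) (s : ℝ) : ℝ :=
  innerP (deriv (deriv γ) s) (nuA γ s)

/-!
The tangent indicatrix `T = γ'` is a closed curve on the unit sphere whose length is the total
absolute curvature. If that length were less than `2π`, cut `T` at `T 0` and at the point `T m`
halving the length: the spherical distances from any `T s` to these two points add up to less than
`π`, so `⟪T 0 + T m, T s⟫ > 0` for all `s`. Hence `⟪T 0 + T m, γ⟫` has positive derivative, which
contradicts Rolle's theorem since `γ` is closed.
-/

lemma periodic_deriv_s3 {𝕜 F : Type*} [NontriviallyNormedField 𝕜] [NormedAddCommGroup F]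
    [NormedSpace 𝕜 F] {f : 𝕜 → F} {c : 𝕜} (hf : Function.Periodic f c) :
    Function.Periodic (deriv f) c := fun s => by
  rw [← deriv_comp_add_const, funext hf]

section UnitSphere

open InnerProductGeometry Set
open scoped RealInnerProductSpace Topology

variable {E : Type*} [NormedAddCommGroup E] [InnerProductSpace ℝ E]

lemma angle_eq_two_mul_arcsin_norm_sub_div_two {x y : E} (hx : ‖x‖ = 1) (hy : ‖y‖ = 1) :
    angle x y = 2 * arcsin (‖y - x‖ / 2) := by
  have hsin : sin (angle x y / 2) = ‖y - x‖ / 2 := by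
    have hsin_nonneg : 0 ≤ sin (angle x y / 2) :=
      sin_nonneg_of_nonneg_of_le_pi (by linarith [angle_nonneg x y])
        (by linarith [angle_le_pi x y, pi_pos])
    rw [← sq_eq_sq₀ hsin_nonneg (by positivity), sin_sq_eq_half_sub, div_pow, norm_sub_rev,
      norm_sub_sq_real, inner_eq_cos_angle_of_norm_eq_one hx hy, hx, hy,
      mul_div_cancel₀ _ two_ne_zero]
    ring
  rw [← hsin, arcsin_sin (by linarith [angle_nonneg x y, pi_pos]) (by linarith [angle_le_pi x y])]
  ring

lemma inner_add_pos_of_angle_add_angle_lt_pi {x y z : E} (hxy : ‖x‖ = ‖y‖)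
    (h : angle x z + angle z y < π) : 0 < ⟪x + y, z⟫ := by
  have hx : 0 < ‖x‖ := by
    refine norm_pos_iff.2 fun hx => ?_
    have hy : y = 0 := by rwa [hx, norm_zero, eq_comm, norm_eq_zero] at hxy
    simp [hx, hy] at h
  have hz : 0 < ‖z‖ := by
    refine norm_pos_iff.2 fun hz => ?_
    simp [hz] at h
  have hcos : 0 < cos (angle x z) + cos (angle y z) := by
    have hlt := cos_lt_cos_of_nonneg_of_le_pi (angle_nonneg x z)
      (sub_le_self π (angle_nonneg z y)) (lt_sub_iff_add_lt.2 h)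
    rw [cos_pi_sub, angle_comm z y] at hlt
    linarith
  calc 0 < (cos (angle x z) + cos (angle y z)) * (‖x‖ * ‖z‖) := by positivity
    _ = ⟪x + y, z⟫ := by
      rw [add_mul, cos_angle_mul_norm_mul_norm, hxy, cos_angle_mul_norm_mul_norm, inner_add_left]

lemma hasDerivWithinAt_norm_sub_Ioi {f : ℝ → E} {f' : E} {s : ℝ} (hf : HasDerivAt f f' s) :
    HasDerivWithinAt (fun z => ‖f z - f s‖) ‖f'‖ (Ioi s) s := by
  have hslope : Tendsto (fun z => ‖slope f s z‖) (𝓝[>] s) (𝓝 ‖f'‖) :=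
    ((hasDerivWithinAt_iff_tendsto_slope' self_notMem_Ioi).1 hf.hasDerivWithinAt).norm
  refine (hasDerivWithinAt_iff_tendsto_slope' self_notMem_Ioi).2 (hslope.congr' ?_)
  filter_upwards [self_mem_nhdsWithin] with z (hz : s < z)
  rw [slope_def_module, slope_def_field, norm_smul, sub_self, norm_zero, sub_zero, norm_inv,
    norm_of_nonneg (sub_pos.2 hz).le, div_eq_inv_mul]

lemma inner_deriv_eq_zero_of_norm_eq_const {f : ℝ → E} {r s : ℝ} (hf : DifferentiableAt ℝ f s)
    (hnorm : ∀ t, ‖f t‖ = r) : ⟪f s, deriv f s⟫ = 0 := by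
  have hconst : HasDerivAt (‖f ·‖ ^ 2) 0 s := by
    simpa [hnorm, Pi.pow_def] using hasDerivAt_const s (r ^ 2)
  linarith [hf.hasDerivAt.norm_sq.unique hconst]

lemma hasDerivWithinAt_angle_Ioi {T : ℝ → E} {T' : E} {s : ℝ} (hT : HasDerivAt T T' s)
    (hunit : ∀ t, ‖T t‖ = 1) :
    HasDerivWithinAt (fun z => angle (T s) (T z)) ‖T'‖ (Ioi s) s := by
  simp only [angle_eq_two_mul_arcsin_norm_sub_div_two (hunit _) (hunit _)]
  have hchord := (hasDerivWithinAt_norm_sub_Ioi hT).div_const 2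
  have harcsin : HasDerivAt arcsin 1 (‖T s - T s‖ / 2) := by
    simpa using hasDerivAt_arcsin (x := 0) (by norm_num) (by norm_num)
  exact ((harcsin.comp_hasDerivWithinAt s hchord).const_mul 2).congr_deriv (by ring)

lemma angle_le_integral_norm_deriv {T : ℝ → E} (hT : ContDiff ℝ 1 T) (hunit : ∀ s, ‖T s‖ = 1)
    {a b : ℝ} (hab : a ≤ b) : angle (T a) (T b) ≤ ∫ s in a..b, ‖deriv T s‖ := by
  have hne : ∀ s, T s ≠ 0 := fun s => norm_ne_zero_iff.1 (by simp [hunit s])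
  have hspeed : Continuous fun s => ‖deriv T s‖ := (hT.continuous_deriv le_rfl).norm
  have hlength : ∀ s, HasDerivAt (fun z => ∫ t in a..z, ‖deriv T t‖) ‖deriv T s‖ s := fun s =>
    (hspeed.integral_hasStrictDerivAt a s).hasDerivAt
  have hangle : Continuous fun s => angle (T a) (T s) := continuous_iff_continuousAt.2 fun s =>
    (continuousAt_angle (x := (T a, T s)) (hne a) (hne s)).comp
      (f := fun s => (T a, T s)) (continuousAt_const.prodMk hT.continuous.continuousAt)
  refine image_le_of_liminf_slope_right_le_deriv_boundary hangle.continuousOn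
    (by simp [angle_self (hne a)]) (fun s _ => (hlength s).continuousAt.continuousWithinAt)
    (fun s _ => (hlength s).hasDerivWithinAt) (fun s _ r hr => ?_) (right_mem_Icc.2 hab)
  have hlim := (hasDerivWithinAt_iff_tendsto_slope' self_notMem_Ioi).1
    (hasDerivWithinAt_angle_Ioi ((hT.differentiable one_ne_zero s).hasDerivAt) hunit)
  refine Eventually.frequently ?_
  filter_upwards [hlim.eventually_lt_const hr, self_mem_nhdsWithin] with z hzr (hz : s < z)
  refine lt_of_le_of_lt ?_ hzr
  rw [slope_def_field, slope_def_field, angle_self (hne s), sub_zero]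
  exact div_le_div_of_nonneg_right
    (sub_le_iff_le_add'.2 (angle_le_angle_add_angle _ _ _)) (sub_pos.2 hz).le

lemma exists_integral_eq_half_integral {f : ℝ → ℝ} {a b : ℝ}
    (hf : IntervalIntegrable f volume a b) :
    ∃ m ∈ uIcc a b, ∫ s in a..m, f s = (∫ s in a..b, f s) / 2 := by
  refine intermediate_value_uIcc
    (intervalIntegral.continuousOn_primitive_interval' hf left_mem_uIcc) ?_
  rw [intervalIntegral.integral_same, mem_uIcc]
  rcases le_total 0 (∫ s in a..b, f s) with h | h
  · exact Or.inl ⟨by linarith, by linarith⟩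
  · exact Or.inr ⟨by linarith, by linarith⟩

lemma exists_forall_inner_pos_of_integral_norm_deriv_lt_two_pi {T : ℝ → E} (hT : ContDiff ℝ 1 T)
    (hunit : ∀ s, ‖T s‖ = 1) {a b : ℝ} (hclosed : T b = T a)
    (hlen : ∫ s in a..b, ‖deriv T s‖ < 2 * π) :
    ∃ v : E, ∀ s ∈ Icc a b, 0 < ⟪v, T s⟫ := by
  have hint : ∀ x y, IntervalIntegrable (fun s => ‖deriv T s‖) volume x y :=
    (hT.continuous_deriv le_rfl).norm.intervalIntegrable
  obtain ⟨m, -, hhalf⟩ := exists_integral_eq_half_integral (hint a b)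
  have hsplit : ∀ x y z, (∫ s in x..y, ‖deriv T s‖) + ∫ s in y..z, ‖deriv T s‖
      = ∫ s in x..z, ‖deriv T s‖ := fun x y z =>
    intervalIntegral.integral_add_adjacent_intervals (hint x y) (hint y z)
  have hdetour : ∀ {x y z}, x ≤ y → y ≤ z →
      angle (T x) (T y) + angle (T y) (T z) ≤ ∫ s in x..z, ‖deriv T s‖ := by
    intro x y z hxy hyz
    rw [← hsplit x y z]
    exact add_le_add (angle_le_integral_norm_deriv hT hunit hxy)
      (angle_le_integral_norm_deriv hT hunit hyz)
  refine ⟨T a + T m, fun s hs => ?_⟩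
  refine inner_add_pos_of_angle_add_angle_lt_pi (by rw [hunit, hunit]) ?_
  rcases le_total s m with hsm | hms
  · linarith [hdetour hs.1 hsm]
  · rw [← hclosed, add_comm, angle_comm (T s), angle_comm (T b)]
    linarith [hdetour hms hs.2, hsplit a m b]

theorem total_absolute_curvature_ge_two_pi_general {γ : ℝ → E} {a b : ℝ} (hab : a < b)
    (hγ : ContDiff ℝ 2 γ) (hunit : ∀ s, ‖deriv γ s‖ = 1) (hclosed : γ b = γ a)
    (hclosed' : deriv γ b = deriv γ a) :
    2 * π ≤ ∫ s in a..b, ‖deriv (deriv γ) s‖ := by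
  by_contra! hlen
  obtain ⟨v, hv⟩ := exists_forall_inner_pos_of_integral_norm_deriv_lt_two_pi
    (hγ.deriv' : ContDiff ℝ 1 (deriv γ)) hunit hclosed' hlen
  have hheight : ∀ s, HasDerivAt (fun t => ⟪v, γ t⟫) ⟪v, deriv γ s⟫ s := fun s =>
    (innerSL ℝ v).hasFDerivAt.comp_hasDerivAt s (hγ.differentiable two_ne_zero s).hasDerivAt
  obtain ⟨s, hs, hzero⟩ := exists_hasDerivAt_eq_zero hab
    (fun s _ => (hheight s).continuousAt.continuousWithinAt) (by rw [hclosed])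
    (fun s _ => hheight s)
  exact (hv s (Ioo_subset_Icc_self hs)).ne' hzero

end UnitSphere

section Plane

open scoped RealInnerProductSpace

lemma norm_toLp_eq_one_iff {u : ℝ × ℝ} : ‖WithLp.toLp 2 u‖ = 1 ↔ u.1 ^ 2 + u.2 ^ 2 = 1 := by
  simp [WithLp.prod_norm_eq_of_L2]

lemma deriv_toLp (γ : ℝ → ℝ × ℝ) :
    deriv (fun s => WithLp.toLp 2 (γ s)) = fun s => WithLp.toLp 2 (deriv γ s) := by
  funext s
  have h := (WithLp.prodContinuousLinearEquiv 2 ℝ ℝ ℝ).symm.comp_fderiv (f := γ) (x := s)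
  simpa [Function.comp_def] using congrArg (· 1) h

lemma abs_innerP_rotation_eq_norm {u w : ℝ × ℝ} (hu : ‖WithLp.toLp 2 u‖ = 1)
    (huw : ⟪WithLp.toLp 2 u, WithLp.toLp 2 w⟫ = 0) :
    |innerP w (u.2, -u.1)| = ‖WithLp.toLp 2 w‖ := by
  rw [norm_toLp_eq_one_iff] at hu
  have huw : u.1 * w.1 + u.2 * w.2 = 0 := by
    simpa [WithLp.prod_inner_apply, mul_comm] using huw
  rw [← sq_eq_sq₀ (abs_nonneg _) (norm_nonneg _), sq_abs, WithLp.prod_norm_sq_eq_of_L2,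
    norm_eq_abs, norm_eq_abs, sq_abs, sq_abs]
  simp only [innerP, WithLp.toLp_fst, WithLp.toLp_snd]
  linear_combination (w.1 ^ 2 + w.2 ^ 2) * hu - (u.1 * w.1 + u.2 * w.2) * huw

lemma abs_curvA_eq_norm_deriv_deriv {γ : ℝ → ℝ × ℝ} (hγ : ContDiff ℝ 2 γ)
    (hunit : ∀ s, (deriv γ s).1 ^ 2 + (deriv γ s).2 ^ 2 = 1) (s : ℝ) :
    |curvA γ s| = ‖deriv (deriv fun t => WithLp.toLp 2 (γ t)) s‖ := by
  have hγ' : ContDiff ℝ 1 (deriv γ) := hγ.deriv'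
  have hunit' : ∀ t, ‖WithLp.toLp 2 (deriv γ t)‖ = 1 := fun t => norm_toLp_eq_one_iff.2 (hunit t)
  have horth := inner_deriv_eq_zero_of_norm_eq_const
    ((WithLp.contDiff_toLp.comp hγ').differentiable one_ne_zero s) hunit'
  simp only [deriv_toLp] at horth ⊢
  exact abs_innerP_rotation_eq_norm (hunit' s) horth

end Plane

/-- Fenchel-type inequality for plane curves: a smooth closed regular plane
curve parametrised by arc length with period `L > 0` satisfies `∫₀^L |κ| ds ≥ 2π`. -/
theorem total_absolute_curvature_ge_two_pi
    (γ : ℝ → ℝ × ℝ) (L : ℝ) (hL : 0 < L)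
    (hsmooth : ContDiff ℝ (⊤ : ℕ∞) γ)
    (hunit : ∀ s, (deriv γ s).1 ^ 2 + (deriv γ s).2 ^ 2 = 1)
    (hper : ∀ s, γ (s + L) = γ s) :
    2 * Real.pi ≤ ∫ s in (0:ℝ)..L, |curvA γ s| := by
  have hγ : ContDiff ℝ 2 γ := hsmooth.of_le (by norm_cast)
  have hperiodic : Function.Periodic (fun s => WithLp.toLp 2 (γ s)) L := fun s =>
    congrArg (WithLp.toLp 2) (hper s)
  simp only [abs_curvA_eq_norm_deriv_deriv hγ hunit]
  exact total_absolute_curvature_ge_two_pi_general hL (WithLp.contDiff_toLp.comp hγ)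
    (fun s => by simpa only [deriv_toLp, norm_toLp_eq_one_iff] using hunit s)
    hperiodic.eq (periodic_deriv_s3 hperiodic).eq
end

section
/- Let γ : ℝ → ℝ² be a smooth regular plane curve parametrised by arc length that is proper (the preimage of every compact subset of ℝ² is compact), and suppose its curvature satisfies κ''(s) = 0 for all s ∈ ℝ. Then γ is a straight line: γ(s) = γ(0) + s γ'(0) for all s ∈ ℝ. -/
/-!
The centre of curvature `γ + κ⁻¹ ν` has velocity `(κ⁻¹)' ν`. So where `κ` is positive and
nondecreasing it moves, from time `s` to time `t`, by at most `κ(s)⁻¹ - κ(t)⁻¹`, and the curve never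
leaves its osculating disc at `s` (the Tait–Kneser theorem). If `κ'' = 0` then `κ` is affine. Unless
it vanishes identically, `|κ|` is eventually positive and nondecreasing towards both ends, so that
the whole curve is bounded, and in particular not proper.
-/

open Real MeasureTheory Filter

section General

open Set Bornology

variable {E : Type*} [NormedAddCommGroup E] [NormedSpace ℝ E]

theorem eq_add_smul_deriv_of_deriv_deriv_eq_zero {f : ℝ → E} (hf : Differentiable ℝ f)
    (hf' : Differentiable ℝ (deriv f)) (h : ∀ t, deriv (deriv f) t = 0) (t : ℝ) :
    f t = f 0 + t • deriv f 0 := by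
  have hderiv : ∀ r, HasDerivAt (fun r => f r - r • deriv f 0) 0 r := fun r => by
    refine ((hf r).hasDerivAt.sub ((hasDerivAt_id r).smul_const (deriv f 0))).congr_deriv ?_
    rw [is_const_of_deriv_eq_zero hf' h r 0, one_smul, sub_self]
  have hconst := is_const_of_deriv_eq_zero (fun r => (hderiv r).differentiableAt)
    (fun r => (hderiv r).deriv) t 0
  rw [zero_smul, sub_zero] at hconst
  exact sub_eq_iff_eq_add.1 hconst

theorem not_isBounded_range_of_isCompact_preimage {X Y : Type*} [TopologicalSpace X]
    [NoncompactSpace X] [PseudoMetricSpace Y] [ProperSpace Y] {f : X → Y}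
    (hf : ∀ C : Set Y, IsCompact C → IsCompact (f ⁻¹' C)) : ¬ IsBounded (range f) := fun hb =>
  noncompact_univ X <| (preimage_eq_univ_iff.2 subset_closure).subst (hf _ hb.isCompact_closure)

theorem isBounded_range_of_isBounded_image_Ici_of_isBounded_image_Iic {X : Type*}
    [PseudoMetricSpace X] {f : ℝ → X} (hf : Continuous f) {r s : ℝ}
    (hr : IsBounded (f '' Iic r)) (hs : IsBounded (f '' Ici s)) : IsBounded (range f) := by
  have hmid : IsBounded (f '' Icc r s) := (isCompact_Icc.image hf).isBounded
  refine ((hr.union hmid).union hs).subset ?_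
  rintro _ ⟨t, rfl⟩
  rcases le_total t r with htr | hrt
  · exact .inl (.inl (mem_image_of_mem f htr))
  rcases le_total t s with hts | hst
  · exact .inl (.inr (mem_image_of_mem f ⟨hrt, hts⟩))
  · exact .inr (mem_image_of_mem f hst)

/-- A normal field `ν` with curvature `κ` along a curve `γ`, as encoded by the Frenet equation
`ν' = -κ γ'`. As `E` need not be an inner product space, orthogonality to `γ'` is not required, and
`‖ν‖ = 1` is weakened to `‖ν‖ ≤ 1`, which a Euclidean unit normal also satisfies in the supremum
norm of `ℝ × ℝ`. -/
structure IsFrenetNormal (γ ν : ℝ → E) (κ : ℝ → ℝ) : Prop where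
  differentiable : Differentiable ℝ γ
  hasDerivAt_normal : ∀ t, HasDerivAt ν (-κ t • deriv γ t) t
  norm_le_one : ∀ t, ‖ν t‖ ≤ 1

/-- The evolute of `γ`, that is, the curve of its centres of curvature. Where `κ` vanishes the
centre is at infinity and the value here is `γ t`. -/
noncomputable def evolute (γ ν : ℝ → E) (κ : ℝ → ℝ) (t : ℝ) : E := γ t + (κ t)⁻¹ • ν t

namespace IsFrenetNormal

variable {γ ν : ℝ → E} {κ κ' : ℝ → ℝ} {a b s t : ℝ}

theorem neg (h : IsFrenetNormal γ ν κ) : IsFrenetNormal γ (-ν) (-κ) where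
  differentiable := h.differentiable
  hasDerivAt_normal t := (h.hasDerivAt_normal t).neg.congr_deriv (neg_smul _ _).symm
  norm_le_one t := (norm_neg (ν t)).trans_le (h.norm_le_one t)

theorem comp_neg (h : IsFrenetNormal γ ν κ) :
    IsFrenetNormal (fun t => γ (-t)) (fun t => ν (-t)) (fun t => κ (-t)) where
  differentiable := h.differentiable.comp differentiable_neg
  hasDerivAt_normal t :=
    ((h.hasDerivAt_normal (-t)).scomp t (hasDerivAt_neg t)).congr_deriv <| by
      rw [deriv_comp_neg, neg_one_smul, neg_smul, neg_smul, smul_neg]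
  norm_le_one t := h.norm_le_one (-t)

theorem hasDerivAt_evolute (h : IsFrenetNormal γ ν κ) {m : ℝ} (hκ : HasDerivAt κ m t)
    (ht : κ t ≠ 0) : HasDerivAt (evolute γ ν κ) ((-m / κ t ^ 2) • ν t) t := by
  refine ((h.differentiable t).hasDerivAt.add
    ((hκ.inv ht).smul (h.hasDerivAt_normal t))).congr_deriv ?_
  rw [Pi.inv_apply, smul_smul, mul_neg, inv_mul_cancel₀ ht, neg_one_smul, add_neg_cancel_left]

theorem norm_evolute_sub_le (h : IsFrenetNormal γ ν κ)
    (hκ : ∀ r ∈ Ici s, HasDerivAt κ (κ' r) r) (hκ' : ∀ r ∈ Ici s, 0 ≤ κ' r)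
    (hpos : ∀ r ∈ Ici s, 0 < κ r) (hst : s ≤ t) :
    ‖evolute γ ν κ t - evolute γ ν κ s‖ ≤ (κ s)⁻¹ - (κ t)⁻¹ := by
  have hevolute : ∀ r ∈ Ici s, HasDerivAt (fun r => evolute γ ν κ r - evolute γ ν κ s)
      ((-κ' r / κ r ^ 2) • ν r) r := fun r hr =>
    (h.hasDerivAt_evolute (hκ r hr) (hpos r hr).ne').sub_const _
  have hradius : ∀ r ∈ Ici s, HasDerivAt (fun r => (κ s)⁻¹ - (κ r)⁻¹) (κ' r / κ r ^ 2) r :=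
    fun r hr => (((hκ r hr).fun_inv (hpos r hr).ne').const_sub _).congr_deriv (by ring)
  have hspeed : ∀ r ∈ Ici s, ‖(-κ' r / κ r ^ 2) • ν r‖ ≤ κ' r / κ r ^ 2 := fun r hr => by
    have hnonneg : 0 ≤ κ' r / κ r ^ 2 := div_nonneg (hκ' r hr) (sq_nonneg _)
    rw [norm_smul, neg_div, norm_neg, Real.norm_of_nonneg hnonneg]
    exact mul_le_of_le_one_right hnonneg (h.norm_le_one r)
  exact image_norm_le_of_norm_deriv_right_le_deriv_boundary'
    (fun r hr => (hevolute r hr.1).continuousAt.continuousWithinAt)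
    (fun r hr => (hevolute r hr.1).hasDerivWithinAt) (by simp)
    (fun r hr => (hradius r hr.1).continuousAt.continuousWithinAt)
    (fun r hr => (hradius r hr.1).hasDerivWithinAt)
    (fun r hr => hspeed r hr.1) (right_mem_Icc.2 hst)

theorem mem_closedBall_evolute (h : IsFrenetNormal γ ν κ)
    (hκ : ∀ r ∈ Ici s, HasDerivAt κ (κ' r) r) (hκ' : ∀ r ∈ Ici s, 0 ≤ κ' r)
    (hpos : 0 < κ s) (hst : s ≤ t) :
    γ t ∈ Metric.closedBall (evolute γ ν κ s) (κ s)⁻¹ := by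
  have hmono : MonotoneOn κ (Ici s) := monotoneOn_of_hasDerivWithinAt_nonneg (convex_Ici s)
    (fun r hr => (hκ r hr).continuousAt.continuousWithinAt)
    (fun r hr => (hκ r (interior_subset hr)).hasDerivWithinAt)
    (fun r hr => hκ' r (interior_subset hr))
  have hpos' : ∀ r ∈ Ici s, 0 < κ r := fun r hr =>
    hpos.trans_le (hmono self_mem_Ici hr hr)
  have hradius : ‖γ t - evolute γ ν κ t‖ ≤ (κ t)⁻¹ := by
    have hinv : 0 ≤ (κ t)⁻¹ := (inv_pos.2 (hpos' t hst)).le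
    rw [evolute, sub_add_cancel_left, norm_neg, norm_smul, Real.norm_of_nonneg hinv]
    exact mul_le_of_le_one_right hinv (h.norm_le_one t)
  rw [mem_closedBall_iff_norm]
  calc ‖γ t - evolute γ ν κ s‖
      ≤ ‖γ t - evolute γ ν κ t‖ + ‖evolute γ ν κ t - evolute γ ν κ s‖ :=
        norm_sub_le_norm_sub_add_norm_sub _ _ _
    _ ≤ (κ t)⁻¹ + ((κ s)⁻¹ - (κ t)⁻¹) :=
        add_le_add hradius (h.norm_evolute_sub_le hκ hκ' hpos' hst)
    _ = (κ s)⁻¹ := add_sub_cancel _ _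

theorem isBounded_image_Ici (h : IsFrenetNormal γ ν κ)
    (hκ : ∀ r ∈ Ici s, HasDerivAt κ (κ' r) r) (hκ' : ∀ r ∈ Ici s, 0 ≤ κ s * κ' r)
    (hs : κ s ≠ 0) : IsBounded (γ '' Ici s) := by
  wlog hpos : 0 < κ s generalizing ν κ κ'
  · have hneg : κ s < 0 := hs.lt_of_le (not_lt.1 hpos)
    exact this h.neg (κ' := -κ') (fun r hr => (hκ r hr).neg)
      (fun r hr => by simpa using hκ' r hr) (neg_ne_zero.2 hs) (neg_pos.2 hneg)
  have hnonneg : ∀ r ∈ Ici s, 0 ≤ κ' r := fun r hr => nonneg_of_mul_nonneg_right (hκ' r hr) hpos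
  exact Metric.isBounded_closedBall.subset <|
    image_subset_iff.2 fun t ht => h.mem_closedBall_evolute hκ hnonneg hpos ht

theorem exists_isBounded_image_Ici_of_affine (h : IsFrenetNormal γ ν fun t => a * t + b)
    (hab : a ≠ 0 ∨ b ≠ 0) : ∃ s, IsBounded (γ '' Ici s) := by
  obtain ⟨s, hs, ha⟩ : ∃ s, a * s + b ≠ 0 ∧ 0 ≤ (a * s + b) * a := by
    by_cases ha : a = 0
    · exact ⟨0, by simpa [ha] using hab, by simp [ha]⟩
    · have hκ : a * ((a - b) / a) + b = a := by rw [mul_div_cancel₀ _ ha, sub_add_cancel]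
      exact ⟨(a - b) / a, by rwa [hκ], by rw [hκ]; exact mul_self_nonneg a⟩
  have hκ : ∀ t, HasDerivAt (fun t => a * t + b) a t := fun t => by
    simpa using ((hasDerivAt_id t).const_mul a).add_const b
  exact ⟨s, h.isBounded_image_Ici (fun r _ => hκ r) (fun _ _ => ha) hs⟩

theorem isBounded_range_of_affine (h : IsFrenetNormal γ ν fun t => a * t + b)
    (hab : a ≠ 0 ∨ b ≠ 0) : IsBounded (range γ) := by
  obtain ⟨s, hs⟩ := h.exists_isBounded_image_Ici_of_affine hab
  have hreverse : IsFrenetNormal (fun t => γ (-t)) (fun t => ν (-t)) (fun t => -a * t + b) := by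
    simpa only [mul_neg, neg_mul] using h.comp_neg
  obtain ⟨r, hr⟩ := hreverse.exists_isBounded_image_Ici_of_affine (hab.imp_left neg_ne_zero.2)
  have hr' : IsBounded (γ '' Iic (-r)) := by
    rwa [← image_neg_Ici, image_image]
  exact isBounded_range_of_isBounded_image_Ici_of_isBounded_image_Iic
    h.differentiable.continuous hr' hs

end IsFrenetNormal

end General

section PlaneCurve

variable {γ : ℝ → ℝ × ℝ}

theorem contDiff_curvA {n : WithTop ℕ∞} (hγ : ContDiff ℝ (n + 2) γ) : ContDiff ℝ n (curvA γ) := by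
  rw [← one_add_one_eq_two, ← add_assoc] at hγ
  have hγ' : ContDiff ℝ (n + 1) (deriv γ) := (contDiff_succ_iff_deriv.1 hγ).2.2
  have hγ'' : ContDiff ℝ n (deriv (deriv γ)) := (contDiff_succ_iff_deriv.1 hγ').2.2
  have hγ'n : ContDiff ℝ n (deriv γ) := hγ'.of_le le_self_add
  exact (hγ''.fst.mul hγ'n.snd).add (hγ''.snd.mul hγ'n.fst.neg)

theorem innerP_deriv_deriv_deriv_eq_zero (hγ' : Differentiable ℝ (deriv γ))
    (hunit : ∀ s, (deriv γ s).1 ^ 2 + (deriv γ s).2 ^ 2 = 1) (s : ℝ) :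
    innerP (deriv γ s) (deriv (deriv γ) s) = 0 := by
  have hfst := hasFDerivAt_fst.comp_hasDerivAt s (hγ' s).hasDerivAt
  have hsnd := hasFDerivAt_snd.comp_hasDerivAt s (hγ' s).hasDerivAt
  have hsq : HasDerivAt (fun r => (deriv γ r).1 ^ 2 + (deriv γ r).2 ^ 2)
      (2 * innerP (deriv γ s) (deriv (deriv γ) s)) s := by
    refine ((hfst.pow 2).add (hsnd.pow 2)).congr_deriv ?_
    simp only [Nat.cast_ofNat, Function.comp_apply, Nat.add_one_sub_one, pow_one,
      ContinuousLinearMap.coe_fst', ContinuousLinearMap.coe_snd', innerP]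
    ring
  have hconst := (hasDerivAt_const s (1 : ℝ)).congr_of_eventuallyEq (.of_forall hunit)
  simpa using hsq.unique hconst

theorem deriv_deriv_eq_curvA_smul_nuA (hγ' : Differentiable ℝ (deriv γ))
    (hunit : ∀ s, (deriv γ s).1 ^ 2 + (deriv γ s).2 ^ 2 = 1) (s : ℝ) :
    deriv (deriv γ) s = curvA γ s • nuA γ s := by
  have horth := innerP_deriv_deriv_deriv_eq_zero hγ' hunit s
  simp only [innerP] at horth
  ext
  · simp only [curvA, innerP, nuA, Prod.smul_fst, smul_eq_mul]
    linear_combination (deriv γ s).1 * horth - (deriv (deriv γ) s).1 * hunit s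
  · simp only [curvA, innerP, nuA, Prod.smul_snd, smul_eq_mul]
    linear_combination (deriv γ s).2 * horth - (deriv (deriv γ) s).2 * hunit s

theorem isFrenetNormal_nuA (hγ : Differentiable ℝ γ) (hγ' : Differentiable ℝ (deriv γ))
    (hunit : ∀ s, (deriv γ s).1 ^ 2 + (deriv γ s).2 ^ 2 = 1) :
    IsFrenetNormal γ (nuA γ) (curvA γ) where
  differentiable := hγ
  hasDerivAt_normal s := by
    have hfst := hasFDerivAt_fst.comp_hasDerivAt s (hγ' s).hasDerivAt
    have hsnd := hasFDerivAt_snd.comp_hasDerivAt s (hγ' s).hasDerivAt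
    refine (hsnd.prodMk hfst.neg).congr_deriv ?_
    rw [deriv_deriv_eq_curvA_smul_nuA hγ' hunit s]
    ext <;> simp [nuA]
  norm_le_one s := by
    rw [nuA, Prod.norm_mk, norm_neg, Real.norm_eq_abs, Real.norm_eq_abs]
    refine max_le ?_ ?_ <;> refine abs_le_one_iff_mul_self_le_one.2 ?_ <;> nlinarith [hunit s]

end PlaneCurve

theorem proper_stationary_is_line_general (γ : ℝ → ℝ × ℝ) (hγ : ContDiff ℝ 4 γ)
    (hunit : ∀ s, (deriv γ s).1 ^ 2 + (deriv γ s).2 ^ 2 = 1)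
    (hunbounded : ¬ Bornology.IsBounded (Set.range γ))
    (hstat : ∀ s, deriv (deriv (curvA γ)) s = 0) :
    ∀ s, γ s = γ 0 + s • deriv γ 0 := by
  have hdiff : Differentiable ℝ γ := hγ.differentiable (by norm_num)
  have hdiff' : Differentiable ℝ (deriv γ) :=
    (hγ.iterate_deriv' 3 1).differentiable (by norm_num)
  have hcurv : ContDiff ℝ 2 (curvA γ) := contDiff_curvA (by rwa [two_add_two_eq_four])
  have haffine : curvA γ = fun t => deriv (curvA γ) 0 * t + curvA γ 0 := funext fun t => by
    rw [eq_add_smul_deriv_of_deriv_deriv_eq_zero (hcurv.differentiable two_ne_zero)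
      ((hcurv.iterate_deriv' 1 1).differentiable one_ne_zero) hstat t, smul_eq_mul]
    ring
  have hfrenet := isFrenetNormal_nuA hdiff hdiff' hunit
  rw [haffine] at hfrenet
  have hzero : deriv (curvA γ) 0 = 0 ∧ curvA γ 0 = 0 := by
    by_contra hne
    exact hunbounded (hfrenet.isBounded_range_of_affine (not_and_or.1 hne))
  refine eq_add_smul_deriv_of_deriv_deriv_eq_zero hdiff hdiff' fun s => ?_
  rw [deriv_deriv_eq_curvA_smul_nuA hdiff' hunit s, haffine, hzero.1, hzero.2]
  simp

/-- a proper open stationary solution of the curve diffusion flow (`κ'' ≡ 0`)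
is a straight line. -/
theorem proper_stationary_is_line
    (γ : ℝ → ℝ × ℝ)
    (hsmooth : ContDiff ℝ (⊤ : ℕ∞) γ)
    (hunit : ∀ s, (deriv γ s).1 ^ 2 + (deriv γ s).2 ^ 2 = 1)
    (hproper : ∀ C : Set (ℝ × ℝ), IsCompact C → IsCompact (γ ⁻¹' C))
    (hstat : ∀ s, deriv (deriv (curvA γ)) s = 0) :
    ∀ s, γ s = γ 0 + s • deriv γ 0 :=
  proper_stationary_is_line_general γ (contDiff_infty.1 hsmooth 4) hunit
    (not_isBounded_range_of_isCompact_preimage hproper) hstat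
end
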